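/- arXiv:2110.03911 — 3 statements merged into one kernel-verified Lean document; each statement's English description precedes it below -/
import Mathlib

section
/- The function g(τ) = C·(ψ(τ)−ψ(a))^β·(ψ(b)−ψ(τ))^{α+β−1} is nonnegative on [a,b], and for all t, τ with a ≤ t ≤ τ ≤ b one has 0 ≤ g₂(τ,t) ≤ g(τ); moreover g attains its maximum over [a,b] at the unique point τ₀ ∈ (a,b) satisfying ψ(τ₀) = (β·ψ(b) + (α+β−1)·ψ(a))/(α+2β−1), with maximum value C·β^β·(α+β−1)^{α+β−1}·L^{α+2β−1}/(α+2β−1)^{α+2β−1}. -/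
open MeasureTheory Set

/-- The function `g₂(τ,t) = C·(ψ(t)−ψ(a))^β·(ψ(b)−ψ(τ))^{α+β−1}`,
with `C = 1/(Γ(α+β)·(ψ(b)−ψ(a))^β)`. -/
noncomputable def g₂ (a b α β : ℝ) (ψ : ℝ → ℝ) (τ t : ℝ) : ℝ :=
  (ψ t - ψ a) ^ β * (ψ b - ψ τ) ^ (α + β - 1) /
    (Real.Gamma (α + β) * (ψ b - ψ a) ^ β)

/-- The majorant `g(τ) = C·(ψ(τ)−ψ(a))^β·(ψ(b)−ψ(τ))^{α+β−1}`. -/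
noncomputable def gMaj (a b α β : ℝ) (ψ : ℝ → ℝ) (τ : ℝ) : ℝ :=
  (ψ τ - ψ a) ^ β * (ψ b - ψ τ) ^ (α + β - 1) /
    (Real.Gamma (α + β) * (ψ b - ψ a) ^ β)

/-!
At fixed sum `x + y`, weighted AM-GM makes `x ^ p * y ^ q` largest when `x : y = p : q`. Apply this
to `x = ψ τ - ψ a` and `y = ψ b - ψ τ`, whose sum does not depend on `τ`; since `ψ` is continuous
and strictly increasing, the optimal split is realised at exactly one interior point.
-/

section RpowMulRpow

variable {p q : ℝ}

theorem mul_rpow_mul_mul_rpow {r : ℝ} (hp : 0 ≤ p) (hq : 0 ≤ q) (hr : 0 ≤ r) :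
    (p * r) ^ p * (q * r) ^ q = p ^ p * q ^ q * r ^ (p + q) := by
  rw [Real.mul_rpow hp hr, Real.mul_rpow hq hr, mul_mul_mul_comm,
    Real.rpow_add_of_nonneg hr hp hq]

theorem rpow_mul_rpow_le_of_add_eq {x y s : ℝ} (hp : 0 < p) (hq : 0 < q) (hx : 0 ≤ x)
    (hy : 0 ≤ y) (hs : x + y = s) :
    x ^ p * y ^ q ≤ (p * (s / (p + q))) ^ p * (q * (s / (p + q))) ^ q := by
  subst hs
  have hpq : 0 < p + q := add_pos hp hq
  have hxp : 0 ≤ x / p := by positivity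
  have hyq : 0 ≤ y / q := by positivity
  have amgm : (x / p) ^ (p / (p + q)) * (y / q) ^ (q / (p + q)) ≤ (x + y) / (p + q) :=
    calc (x / p) ^ (p / (p + q)) * (y / q) ^ (q / (p + q))
        ≤ p / (p + q) * (x / p) + q / (p + q) * (y / q) :=
          Real.geom_mean_le_arith_mean2_weighted (by positivity) (by positivity) hxp hyq
            (by field_simp)
      _ = (x + y) / (p + q) := by field_simp
  have amgm_rpow : (x / p) ^ p * (y / q) ^ q ≤ ((x + y) / (p + q)) ^ (p + q) :=
    calc (x / p) ^ p * (y / q) ^ q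
        = ((x / p) ^ (p / (p + q)) * (y / q) ^ (q / (p + q))) ^ (p + q) := by
          rw [Real.mul_rpow (by positivity) (by positivity), ← Real.rpow_mul hxp,
            ← Real.rpow_mul hyq, div_mul_cancel₀ _ hpq.ne', div_mul_cancel₀ _ hpq.ne']
      _ ≤ ((x + y) / (p + q)) ^ (p + q) := Real.rpow_le_rpow (by positivity) amgm hpq.le
  calc x ^ p * y ^ q = p ^ p * q ^ q * ((x / p) ^ p * (y / q) ^ q) := by
        rw [mul_mul_mul_comm, ← Real.mul_rpow hp.le hxp, ← Real.mul_rpow hq.le hyq,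
          mul_div_cancel₀ _ hp.ne', mul_div_cancel₀ _ hq.ne']
    _ ≤ p ^ p * q ^ q * ((x + y) / (p + q)) ^ (p + q) := by gcongr
    _ = (p * ((x + y) / (p + q))) ^ p * (q * ((x + y) / (p + q))) ^ q :=
        (mul_rpow_mul_mul_rpow hp.le hq.le (by positivity)).symm

end RpowMulRpow

section WeightedMean

variable {𝕜 : Type*} [Field 𝕜] {p q u v : 𝕜}

theorem weightedMean_mem_Ioo [LinearOrder 𝕜] [IsStrictOrderedRing 𝕜] (hp : 0 < p) (hq : 0 < q)
    (huv : u < v) :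
    (p * v + q * u) / (p + q) ∈ Ioo u v := by
  rw [← openSegment_eq_Ioo huv, mem_openSegment_iff_div]
  exact ⟨q, p, hq, hp, by simp only [smul_eq_mul]; ring⟩

theorem weightedMean_sub_left (hpq : p + q ≠ 0) :
    (p * v + q * u) / (p + q) - u = p * ((v - u) / (p + q)) := by
  field_simp
  ring

theorem right_sub_weightedMean (hpq : p + q ≠ 0) :
    v - (p * v + q * u) / (p + q) = q * ((v - u) / (p + q)) := by
  field_simp
  ring

end WeightedMean

section Majorant

variable {a b α β τ τ₀ : ℝ} {ψ : ℝ → ℝ}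

theorem gamma_mul_sub_rpow_nonneg (hαβ : 0 ≤ α + β) (hψab : ψ a ≤ ψ b) :
    0 ≤ Real.Gamma (α + β) * (ψ b - ψ a) ^ β :=
  mul_nonneg (Real.Gamma_nonneg_of_nonneg hαβ) (Real.rpow_nonneg (sub_nonneg.2 hψab) _)

theorem g₂_nonneg (hαβ : 0 ≤ α + β) {t : ℝ} (hat : ψ a ≤ ψ t) (hτb : ψ τ ≤ ψ b)
    (hψab : ψ a ≤ ψ b) : 0 ≤ g₂ a b α β ψ τ t :=
  div_nonneg
    (mul_nonneg (Real.rpow_nonneg (sub_nonneg.2 hat) _) (Real.rpow_nonneg (sub_nonneg.2 hτb) _))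
    (gamma_mul_sub_rpow_nonneg hαβ hψab)

theorem gMaj_nonneg (hαβ : 0 ≤ α + β) (haτ : ψ a ≤ ψ τ) (hτb : ψ τ ≤ ψ b) :
    0 ≤ gMaj a b α β ψ τ :=
  g₂_nonneg hαβ haτ hτb (haτ.trans hτb)

theorem g₂_le_gMaj (hβ : 0 ≤ β) (hαβ : 0 ≤ α + β) {t : ℝ} (hat : ψ a ≤ ψ t) (htτ : ψ t ≤ ψ τ)
    (hτb : ψ τ ≤ ψ b) : g₂ a b α β ψ τ t ≤ gMaj a b α β ψ τ := by
  have hD := gamma_mul_sub_rpow_nonneg hαβ (hat.trans (htτ.trans hτb))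
  have hbase : (ψ t - ψ a) ^ β ≤ (ψ τ - ψ a) ^ β :=
    Real.rpow_le_rpow (sub_nonneg.2 hat) (sub_le_sub_right htτ _) hβ
  exact div_le_div_of_nonneg_right
    (mul_le_mul_of_nonneg_right hbase (Real.rpow_nonneg (sub_nonneg.2 hτb) _)) hD

theorem gMaj_eq_split_of_eq_weightedMean (hs : α + 2 * β - 1 ≠ 0)
    (hτ₀ : ψ τ₀ = (β * ψ b + (α + β - 1) * ψ a) / (α + 2 * β - 1)) :
    gMaj a b α β ψ τ₀ =
      (β * ((ψ b - ψ a) / (α + 2 * β - 1))) ^ β *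
        ((α + β - 1) * ((ψ b - ψ a) / (α + 2 * β - 1))) ^ (α + β - 1) /
        (Real.Gamma (α + β) * (ψ b - ψ a) ^ β) := by
  have hsum : α + 2 * β - 1 = β + (α + β - 1) := by ring
  rw [hsum] at hs hτ₀ ⊢
  rw [gMaj, hτ₀, weightedMean_sub_left hs, right_sub_weightedMean hs]

theorem gMaj_eq_of_eq_weightedMean (hβ : 0 < β) (hαβ : 1 ≤ α + β) (hψab : ψ a ≤ ψ b)
    (hτ₀ : ψ τ₀ = (β * ψ b + (α + β - 1) * ψ a) / (α + 2 * β - 1)) :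
    gMaj a b α β ψ τ₀ =
      (1 / (Real.Gamma (α + β) * (ψ b - ψ a) ^ β)) * β ^ β *
        (α + β - 1) ^ (α + β - 1) * (ψ b - ψ a) ^ (α + 2 * β - 1) /
        (α + 2 * β - 1) ^ (α + 2 * β - 1) := by
  have hs : 0 < α + 2 * β - 1 := by linarith
  have hL : 0 ≤ ψ b - ψ a := sub_nonneg.2 hψab
  rw [gMaj_eq_split_of_eq_weightedMean hs.ne' hτ₀,
    mul_rpow_mul_mul_rpow hβ.le (sub_nonneg.2 hαβ) (div_nonneg hL hs.le),
    show β + (α + β - 1) = α + 2 * β - 1 by ring, Real.div_rpow hL hs.le]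
  ring

theorem gMaj_le_of_eq_weightedMean (hβ : 0 < β) (hαβ : 1 < α + β) (haτ : ψ a ≤ ψ τ)
    (hτb : ψ τ ≤ ψ b) (hτ₀ : ψ τ₀ = (β * ψ b + (α + β - 1) * ψ a) / (α + 2 * β - 1)) :
    gMaj a b α β ψ τ ≤ gMaj a b α β ψ τ₀ := by
  have hsum : α + 2 * β - 1 = β + (α + β - 1) := by ring
  have hD := gamma_mul_sub_rpow_nonneg (α := α) (β := β) (by linarith) (haτ.trans hτb)
  rw [gMaj_eq_split_of_eq_weightedMean (by linarith) hτ₀, hsum]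
  exact div_le_div_of_nonneg_right
    (rpow_mul_rpow_le_of_add_eq hβ (sub_pos.2 hαβ) (sub_nonneg.2 haτ) (sub_nonneg.2 hτb)
      (by ring)) hD

theorem exists_mem_Ioo_eq_weightedMean (hab : a < b) (hβ : 0 < β) (hαβ : 1 < α + β)
    (hcont : ContinuousOn ψ (Icc a b)) (hψab : ψ a < ψ b) :
    ∃ τ₀ ∈ Ioo a b, ψ τ₀ = (β * ψ b + (α + β - 1) * ψ a) / (α + 2 * β - 1) := by
  rw [show α + 2 * β - 1 = β + (α + β - 1) by ring]
  exact intermediate_value_Ioo hab.le hcont (weightedMean_mem_Ioo hβ (sub_pos.2 hαβ) hψab)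

end Majorant

theorem gMaj_bounds_and_max_general
    {a b α β : ℝ} (hab : a < b) (hβ : 0 < β) (hαβ : 1 < α + β) {ψ : ℝ → ℝ}
    (hcont : ContinuousOn ψ (Set.Icc a b)) (hmono : StrictMonoOn ψ (Set.Icc a b)) :
    (∀ τ ∈ Set.Icc a b, 0 ≤ gMaj a b α β ψ τ) ∧
    (∀ t τ, a ≤ t → t ≤ τ → τ ≤ b →
      0 ≤ g₂ a b α β ψ τ t ∧ g₂ a b α β ψ τ t ≤ gMaj a b α β ψ τ) ∧
    ∃ τ₀ ∈ Set.Ioo a b,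
      ψ τ₀ = (β * ψ b + (α + β - 1) * ψ a) / (α + 2 * β - 1) ∧
      (∀ τ' ∈ Set.Ioo a b,
        ψ τ' = (β * ψ b + (α + β - 1) * ψ a) / (α + 2 * β - 1) → τ' = τ₀) ∧
      gMaj a b α β ψ τ₀ =
        (1 / (Real.Gamma (α + β) * (ψ b - ψ a) ^ β)) * β ^ β *
          (α + β - 1) ^ (α + β - 1) * (ψ b - ψ a) ^ (α + 2 * β - 1) /
          (α + 2 * β - 1) ^ (α + 2 * β - 1) ∧
      ∀ τ ∈ Set.Icc a b, gMaj a b α β ψ τ ≤ gMaj a b α β ψ τ₀ := by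
  have ha : a ∈ Icc a b := left_mem_Icc.2 hab.le
  have hb : b ∈ Icc a b := right_mem_Icc.2 hab.le
  have hψab : ψ a < ψ b := hmono ha hb hab
  have hlo : ∀ t ∈ Icc a b, ψ a ≤ ψ t := fun t ht => hmono.monotoneOn ha ht ht.1
  have hhi : ∀ t ∈ Icc a b, ψ t ≤ ψ b := fun t ht => hmono.monotoneOn ht hb ht.2
  have hαβ0 : 0 ≤ α + β := by linarith
  obtain ⟨τ₀, hτ₀, hψτ₀⟩ := exists_mem_Ioo_eq_weightedMean hab hβ hαβ hcont hψab
  refine ⟨fun τ hτ => ?nonneg, fun t τ hat htτ hτb => ?bounds,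
    τ₀, hτ₀, hψτ₀, fun τ' hτ' hψτ' => ?unique, ?value, fun τ hτ => ?max⟩
  case nonneg => exact gMaj_nonneg hαβ0 (hlo τ hτ) (hhi τ hτ)
  case bounds =>
    have ht : t ∈ Icc a b := ⟨hat, htτ.trans hτb⟩
    have hτ : τ ∈ Icc a b := ⟨hat.trans htτ, hτb⟩
    exact ⟨g₂_nonneg hαβ0 (hlo t ht) (hhi τ hτ) hψab.le,
      g₂_le_gMaj hβ.le hαβ0 (hlo t ht) (hmono.monotoneOn ht hτ htτ) (hhi τ hτ)⟩
  case unique =>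
    exact hmono.injOn (Ioo_subset_Icc_self hτ') (Ioo_subset_Icc_self hτ₀) (hψτ'.trans hψτ₀.symm)
  case value => exact gMaj_eq_of_eq_weightedMean hβ hαβ.le hψab.le hψτ₀
  case max => exact gMaj_le_of_eq_weightedMean hβ hαβ (hlo τ hτ) (hhi τ hτ) hψτ₀

theorem gMaj_bounds_and_max
    (a b α β : ℝ) (hab : a < b)
    (hα0 : 0 < α) (hα1 : α ≤ 1) (hβ0 : 0 < β) (hβ1 : β ≤ 1) (hαβ : 1 < α + β)
    (ψ ψd : ℝ → ℝ)
    (hψ : ∀ t ∈ Set.Icc a b, HasDerivAt ψ (ψd t) t)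
    (hψd_cont : ContinuousOn ψd (Set.Icc a b))
    (hψd_pos : ∀ t ∈ Set.Icc a b, 0 < ψd t) :
    (∀ τ ∈ Set.Icc a b, 0 ≤ gMaj a b α β ψ τ) ∧
    (∀ t τ, a ≤ t → t ≤ τ → τ ≤ b →
      0 ≤ g₂ a b α β ψ τ t ∧ g₂ a b α β ψ τ t ≤ gMaj a b α β ψ τ) ∧
    ∃ τ₀ ∈ Set.Ioo a b,
      ψ τ₀ = (β * ψ b + (α + β - 1) * ψ a) / (α + 2 * β - 1) ∧
      (∀ τ' ∈ Set.Ioo a b,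
        ψ τ' = (β * ψ b + (α + β - 1) * ψ a) / (α + 2 * β - 1) → τ' = τ₀) ∧
      gMaj a b α β ψ τ₀ =
        (1 / (Real.Gamma (α + β) * (ψ b - ψ a) ^ β)) * β ^ β *
          (α + β - 1) ^ (α + β - 1) * (ψ b - ψ a) ^ (α + 2 * β - 1) /
          (α + 2 * β - 1) ^ (α + 2 * β - 1) ∧
      ∀ τ ∈ Set.Icc a b, gMaj a b α β ψ τ ≤ gMaj a b α β ψ τ₀ := by
  have hcont : ContinuousOn ψ (Icc a b) := HasDerivAt.continuousOn hψ
  exact gMaj_bounds_and_max_general hab hβ0 hαβ hcont <|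
    strictMonoOn_of_hasDerivWithinAt_pos (convex_Icc a b) hcont
      (fun t ht => (hψ t (interior_subset ht)).hasDerivWithinAt)
      (fun t ht => hψd_pos t (interior_subset ht))
end

section
/- For every τ ∈ [a,b] and every t₁, t₂ with a ≤ t₁ ≤ t₂ ≤ b, the Green function satisfies |G(τ,t₂) − G(τ,t₁)| ≤ (2/Γ(α+β)) · (ψ(t₂) − ψ(t₁))^{α+β−1}. -/
open MeasureTheory Set

/-- The Green function of the sequential fractional boundary value problem. -/
noncomputable def G (a b α β : ℝ) (ψ : ℝ → ℝ) (τ t : ℝ) : ℝ :=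
  if τ ≤ t then
    (ψ t - ψ a) ^ β * (ψ b - ψ τ) ^ (α + β - 1) /
        (Real.Gamma (α + β) * (ψ b - ψ a) ^ β) -
      (ψ t - ψ τ) ^ (α + β - 1) / Real.Gamma (α + β)
  else
    (ψ t - ψ a) ^ β * (ψ b - ψ τ) ^ (α + β - 1) /
      (Real.Gamma (α + β) * (ψ b - ψ a) ^ β)

/-!
Write `γ = α + β - 1` and `L = ψ b - ψ a`. Up to the factor `1 / Γ(α + β)`, the Green function is
`((ψ t - ψ a) / L) ^ β * (ψ b - ψ τ) ^ γ - (ψ t - ψ τ)⁺ ^ γ`, a difference of two functions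
nondecreasing in `t`. Since `u ↦ u ^ p` is subadditive for `p ∈ [0, 1]` and `γ ≤ β`, each of them
grows by at most `(ψ t₂ - ψ t₁) ^ γ` from `t₁` to `t₂`. As both increments are nonnegative, their
difference is bounded by the same quantity, so the constant `1` already suffices in place of `2`.
-/

section RealPower

variable {x y β γ : ℝ}

theorem rpow_sub_rpow_le_sub_rpow (hx : 0 ≤ x) (hxy : x ≤ y) (hγ : 0 ≤ γ) (hγ1 : γ ≤ 1) :
    y ^ γ - x ^ γ ≤ (y - x) ^ γ := by
  have h := Real.rpow_add_le_add_rpow hx (sub_nonneg.2 hxy) hγ hγ1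
  rw [add_sub_cancel] at h
  exact sub_le_iff_le_add'.2 h

theorem posPart_rpow_sub_posPart_rpow_mem_Icc (hxy : x ≤ y) (hγ : 0 ≤ γ) (hγ1 : γ ≤ 1) :
    y⁺ ^ γ - x⁺ ^ γ ∈ Icc 0 ((y - x) ^ γ) := by
  have hpos : x⁺ ≤ y⁺ := posPart_mono hxy
  have hsub : y⁺ - x⁺ ≤ y - x := by
    have h := max_sub_max_le_max y 0 x 0
    rwa [sub_zero, max_eq_left (sub_nonneg.2 hxy)] at h
  refine ⟨sub_nonneg.2 (Real.rpow_le_rpow (posPart_nonneg x) hpos hγ), ?_⟩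
  calc y⁺ ^ γ - x⁺ ^ γ ≤ (y⁺ - x⁺) ^ γ :=
        rpow_sub_rpow_le_sub_rpow (posPart_nonneg x) hpos hγ hγ1
    _ ≤ (y - x) ^ γ := Real.rpow_le_rpow (sub_nonneg.2 hpos) hsub hγ

theorem div_rpow_mul_rpow_sub_mem_Icc {s L : ℝ} (hx : 0 ≤ x) (hxy : x ≤ y) (hL : 0 < L)
    (hxyL : y - x ≤ L) (hs : 0 ≤ s) (hsL : s ≤ L) (hγ : 0 ≤ γ) (hγβ : γ ≤ β) (hβ1 : β ≤ 1) :
    (y / L) ^ β * s ^ γ - (x / L) ^ β * s ^ γ ∈ Icc 0 ((y - x) ^ γ) := by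
  have hβ : 0 ≤ β := hγ.trans hγβ
  have hd : 0 ≤ y - x := sub_nonneg.2 hxy
  have hxL : 0 ≤ x / L := by positivity
  have hdiv : x / L ≤ y / L := by gcongr
  have hdL : 0 ≤ (y - x) / L := by positivity
  have hdL1 : (y - x) / L ≤ 1 := (div_le_one hL).2 hxyL
  rw [← sub_mul]
  refine ⟨mul_nonneg (sub_nonneg.2 (Real.rpow_le_rpow hxL hdiv hβ)) (by positivity), ?_⟩
  calc ((y / L) ^ β - (x / L) ^ β) * s ^ γ
      ≤ ((y - x) / L) ^ β * s ^ γ := by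
        rw [sub_div]
        gcongr
        exact rpow_sub_rpow_le_sub_rpow hxL hdiv hβ hβ1
    _ ≤ ((y - x) / L) ^ γ * s ^ γ := by
        gcongr ?_ * _
        exact Real.rpow_le_rpow_of_exponent_ge' hdL hdL1 hγ hγβ
    _ = ((y - x) * (s / L)) ^ γ := by
        rw [← Real.mul_rpow hdL hs, div_mul_eq_mul_div, mul_div_assoc]
    _ ≤ (y - x) ^ γ := by
        gcongr
        exact mul_le_of_le_one_right hd ((div_le_one hL).2 hsL)

end RealPower

theorem strictMonoOn_Icc_of_hasDerivAt_pos {a b : ℝ} {f f' : ℝ → ℝ}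
    (hf : ∀ t ∈ Icc a b, HasDerivAt f (f' t) t) (hf' : ∀ t ∈ Icc a b, 0 < f' t) :
    StrictMonoOn f (Icc a b) :=
  strictMonoOn_of_hasDerivWithinAt_pos (convex_Icc a b)
    (fun t ht => (hf t ht).continuousAt.continuousWithinAt)
    (fun t ht => (hf t (interior_subset ht)).hasDerivWithinAt)
    (fun t ht => hf' t (interior_subset ht))

section GreenFunction

variable {a b α β τ t t₁ t₂ : ℝ} {ψ : ℝ → ℝ}

theorem G_eq_of_monotoneOn (hψ : MonotoneOn ψ (Icc a b)) (hτ : τ ∈ Icc a b) (ht : t ∈ Icc a b)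
    (hαβ : α + β ≠ 1) :
    G a b α β ψ τ t =
      (((ψ t - ψ a) / (ψ b - ψ a)) ^ β * (ψ b - ψ τ) ^ (α + β - 1) -
        (ψ t - ψ τ)⁺ ^ (α + β - 1)) / Real.Gamma (α + β) := by
  have hab : a ≤ b := hτ.1.trans hτ.2
  have hat : 0 ≤ ψ t - ψ a := sub_nonneg.2 (hψ (left_mem_Icc.2 hab) ht ht.1)
  have hL : 0 ≤ ψ b - ψ a := sub_nonneg.2 (hψ (left_mem_Icc.2 hab) (right_mem_Icc.2 hab) hab)
  rw [G, Real.div_rpow hat hL]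
  split_ifs with hτt
  · rw [posPart_of_nonneg (sub_nonneg.2 (hψ hτ ht hτt))]
    ring
  · rw [posPart_of_nonpos (sub_nonpos.2 (hψ ht hτ (not_le.1 hτt).le)),
      Real.zero_rpow (sub_ne_zero.2 hαβ)]
    ring

theorem green_function_continuity_estimate_general (hα1 : α ≤ 1) (hβ1 : β ≤ 1)
    (hαβ : 1 < α + β) (hψ : MonotoneOn ψ (Icc a b)) (hψab : ψ a < ψ b)
    (hτ : τ ∈ Icc a b) (ht₁ : a ≤ t₁) (ht : t₁ ≤ t₂) (ht₂ : t₂ ≤ b) :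
    |G a b α β ψ τ t₂ - G a b α β ψ τ t₁| ≤
      (ψ t₂ - ψ t₁) ^ (α + β - 1) / Real.Gamma (α + β) := by
  have hΓ : 0 < Real.Gamma (α + β) := Real.Gamma_pos_of_pos (by linarith)
  have ha : a ∈ Icc a b := left_mem_Icc.2 (hτ.1.trans hτ.2)
  have hb : b ∈ Icc a b := right_mem_Icc.2 (hτ.1.trans hτ.2)
  have h₁ : t₁ ∈ Icc a b := ⟨ht₁, ht.trans ht₂⟩
  have h₂ : t₂ ∈ Icc a b := ⟨ht₁.trans ht, ht₂⟩
  have hψt : ψ t₁ ≤ ψ t₂ := hψ h₁ h₂ ht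
  obtain ⟨hA₀, hA₁⟩ := div_rpow_mul_rpow_sub_mem_Icc (γ := α + β - 1)
    (sub_nonneg.2 (hψ ha h₁ ht₁)) (sub_le_sub_right hψt (ψ a))
    (sub_pos.2 hψab) (by linarith [hψ ha h₁ ht₁, hψ h₂ hb ht₂]) (sub_nonneg.2 (hψ hτ hb hτ.2))
    (sub_le_sub_left (hψ ha hτ hτ.1) (ψ b)) (by linarith) (by linarith) hβ1
  obtain ⟨hB₀, hB₁⟩ := posPart_rpow_sub_posPart_rpow_mem_Icc (γ := α + β - 1)
    (sub_le_sub_right hψt (ψ τ)) (by linarith) (by linarith)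
  rw [sub_sub_sub_cancel_right] at hA₁ hB₁
  rw [G_eq_of_monotoneOn hψ hτ h₁ hαβ.ne', G_eq_of_monotoneOn hψ hτ h₂ hαβ.ne', ← sub_div,
    abs_div, abs_of_pos hΓ, sub_sub_sub_comm]
  gcongr
  exact abs_sub_le_of_nonneg_of_le hA₀ hA₁ hB₀ hB₁

end GreenFunction

theorem green_function_continuity_estimate
    (a b α β : ℝ) (hab : a < b)
    (hα0 : 0 < α) (hα1 : α ≤ 1) (hβ0 : 0 < β) (hβ1 : β ≤ 1) (hαβ : 1 < α + β)
    (ψ ψd : ℝ → ℝ)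
    (hψ : ∀ t ∈ Set.Icc a b, HasDerivAt ψ (ψd t) t)
    (hψd_cont : ContinuousOn ψd (Set.Icc a b))
    (hψd_pos : ∀ t ∈ Set.Icc a b, 0 < ψd t) :
    ∀ τ ∈ Set.Icc a b, ∀ t₁ t₂, a ≤ t₁ → t₁ ≤ t₂ → t₂ ≤ b →
      |G a b α β ψ τ t₂ - G a b α β ψ τ t₁| ≤
        2 / Real.Gamma (α + β) * (ψ t₂ - ψ t₁) ^ (α + β - 1) := by
  intro τ hτ t₁ t₂ ht₁ ht ht₂
  have hmono := strictMonoOn_Icc_of_hasDerivAt_pos hψ hψd_pos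
  have h := green_function_continuity_estimate_general hα1 hβ1 hαβ hmono.monotoneOn
    (hmono (left_mem_Icc.2 hab.le) (right_mem_Icc.2 hab.le) hab) hτ ht₁ ht ht₂
  rw [div_mul_eq_mul_div, mul_div_assoc]
  exact h.trans (le_mul_of_one_le_left ((abs_nonneg _).trans h) one_le_two)
end

section
/- (Lower bound for eigenvalues) Suppose κ ∈ (0,1) and |𝒢(x)| ≤ κ·‖x‖ for all x ∈ C([a,b],ℝ). If λ ∈ ℝ is such that there exists a nontrivial continuous function x: [a,b] → ℝ satisfying x(t) = ((ψ(t)−ψ(a))/L)^β·𝒢(x) − λ·∫_a^b G(τ,t)·ψ'(τ)·x(τ) dτ for all t ∈ [a,b] (the mild-solution formulation of the eigenvalue problem (ᶜD^{α,ψ}ᶜD^{β,ψ}x)(t) = λ·x(t), x(a) = 0, x(b) = 𝒢(x)), then |λ| ≥ (1−κ)/(G_max·L), where G_max = L^{α+β−1}/Γ(α+β). -/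
open MeasureTheory Set

/-- The supremum norm of a function over the interval `[a,b]`. -/
noncomputable def supNorm (a b : ℝ) (x : ℝ → ℝ) : ℝ :=
  ⨆ t : Set.Icc a b, |x ↑t|

/-!
The Green function factors as `G(τ, t) = w(t) K(τ, b) - K(τ, t)`, the last term being present only
for `τ ≤ t`, where `w(t) = ((ψ t - ψ a) / L) ^ β ∈ [0, 1]` and `K` is the kernel of the fractional
integral of order `α + β ≥ 1` with respect to `ψ`, whose values lie in `[0, K(a, b)]`. A difference
of two numbers in `[0, K(a, b)]` has absolute value at most `K(a, b) = G_max`. Taking suprema in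
the equation for `x` and using `∫ ψ' = L` gives `‖x‖ ≤ κ ‖x‖ + |λ| G_max L ‖x‖`, and `‖x‖ > 0`
can be cancelled.
-/

section SupNorm

variable {a b C : ℝ} {x : ℝ → ℝ}

theorem abs_le_supNorm (hx : ContinuousOn x (Icc a b)) {t : ℝ} (ht : t ∈ Icc a b) :
    |x t| ≤ supNorm a b x := by
  have hbdd : BddAbove (range fun s : Icc a b => |x s|) := by
    simpa only [image_eq_range] using isCompact_Icc.bddAbove_image hx.abs
  exact le_ciSup hbdd ⟨t, ht⟩

theorem supNorm_le (hab : a ≤ b) (hC : ∀ t ∈ Icc a b, |x t| ≤ C) : supNorm a b x ≤ C :=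
  have : Nonempty (Icc a b) := nonempty_Icc_subtype hab
  ciSup_le fun t => hC t t.2

theorem supNorm_pos (hx : ContinuousOn x (Icc a b)) (hne : ∃ t ∈ Icc a b, x t ≠ 0) :
    0 < supNorm a b x := by
  obtain ⟨t, ht, hxt⟩ := hne
  exact (abs_pos.2 hxt).trans_le (abs_le_supNorm hx ht)

end SupNorm

/-- The kernel `(ψ t - ψ τ) ^ (γ - 1) / Γ γ` of the fractional integral of order `γ` with respect
to `ψ`. It is only meaningful for `τ ≤ t` and increasing `ψ`: the cut-off to `0` for `t < τ` is not
part of the definition. -/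
noncomputable def fracKernel (γ : ℝ) (ψ : ℝ → ℝ) (τ t : ℝ) : ℝ :=
  (ψ t - ψ τ) ^ (γ - 1) / Real.Gamma γ

section Green

variable {a b α β γ τ t : ℝ} {ψ : ℝ → ℝ}

theorem fracKernel_mem_Icc (hψ : MonotoneOn ψ (Icc a b)) (hγ : 1 ≤ γ) (haτ : a ≤ τ) (hτt : τ ≤ t)
    (htb : t ≤ b) : fracKernel γ ψ τ t ∈ Icc 0 (fracKernel γ ψ a b) := by
  have hτ : τ ∈ Icc a b := ⟨haτ, hτt.trans htb⟩
  have ht : t ∈ Icc a b := ⟨haτ.trans hτt, htb⟩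
  have hab : a ≤ b := haτ.trans hτ.2
  have hincr : 0 ≤ ψ t - ψ τ := sub_nonneg.2 (hψ hτ ht hτt)
  have hincr_le : ψ t - ψ τ ≤ ψ b - ψ a :=
    sub_le_sub (hψ ht (right_mem_Icc.2 hab) htb) (hψ (left_mem_Icc.2 hab) hτ haτ)
  have hΓ : 0 ≤ Real.Gamma γ := Real.Gamma_nonneg_of_nonneg (zero_le_one.trans hγ)
  exact ⟨div_nonneg (Real.rpow_nonneg hincr _) hΓ,
    div_le_div_of_nonneg_right (Real.rpow_le_rpow hincr hincr_le (sub_nonneg.2 hγ)) hΓ⟩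

theorem rpow_relative_increment_mem_Icc (hψ : MonotoneOn ψ (Icc a b)) (hβ : 0 ≤ β)
    (ht : t ∈ Icc a b) : ((ψ t - ψ a) / (ψ b - ψ a)) ^ β ∈ Icc 0 1 := by
  have hab : a ≤ b := ht.1.trans ht.2
  have hat : 0 ≤ ψ t - ψ a := sub_nonneg.2 (hψ (left_mem_Icc.2 hab) ht ht.1)
  have htb : ψ t - ψ a ≤ ψ b - ψ a := sub_le_sub_right (hψ ht (right_mem_Icc.2 hab) ht.2) _
  have hratio : 0 ≤ (ψ t - ψ a) / (ψ b - ψ a) := div_nonneg hat (hat.trans htb)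
  exact ⟨Real.rpow_nonneg hratio _,
    Real.rpow_le_one hratio (div_le_one_of_le₀ htb (hat.trans htb)) hβ⟩

theorem G_eq_mul_fracKernel_sub (hat : ψ a ≤ ψ t) (hab : ψ a ≤ ψ b) :
    G a b α β ψ τ t = ((ψ t - ψ a) / (ψ b - ψ a)) ^ β * fracKernel (α + β) ψ τ b -
      if τ ≤ t then fracKernel (α + β) ψ τ t else 0 := by
  rw [Real.div_rpow (sub_nonneg.2 hat) (sub_nonneg.2 hab), fracKernel, div_mul_div_comm,
    mul_comm ((ψ b - ψ a) ^ β)]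
  unfold G
  split_ifs
  · rfl
  · rw [sub_zero]

theorem abs_G_le (hψ : MonotoneOn ψ (Icc a b)) (hβ : 0 ≤ β) (hαβ : 1 ≤ α + β)
    (hτ : τ ∈ Icc a b) (ht : t ∈ Icc a b) :
    |G a b α β ψ τ t| ≤ fracKernel (α + β) ψ a b := by
  have hab : a ≤ b := ht.1.trans ht.2
  obtain ⟨hw_nonneg, hw_le⟩ := rpow_relative_increment_mem_Icc hψ hβ ht
  obtain ⟨hK_nonneg, hK_le⟩ := fracKernel_mem_Icc hψ hαβ hτ.1 hτ.2 le_rfl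
  have hcut : (if τ ≤ t then fracKernel (α + β) ψ τ t else 0) ∈
      Icc 0 (fracKernel (α + β) ψ a b) := by
    split_ifs with hτt
    · exact fracKernel_mem_Icc hψ hαβ hτ.1 hτt ht.2
    · exact left_mem_Icc.2 (hK_nonneg.trans hK_le)
  rw [G_eq_mul_fracKernel_sub (hψ (left_mem_Icc.2 hab) ht ht.1)
    (hψ (left_mem_Icc.2 hab) (right_mem_Icc.2 hab) hab)]
  exact abs_sub_le_of_nonneg_of_le (mul_nonneg hw_nonneg hK_nonneg)
    ((mul_le_of_le_one_left hK_nonneg hw_le).trans hK_le) hcut.1 hcut.2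

end Green

section Derivative

variable {a b A B : ℝ} {k ψ ψ' x : ℝ → ℝ}

theorem lt_of_hasDerivAt_pos (hab : a < b) (hψ : ContinuousOn ψ (Icc a b))
    (hψ' : ∀ t ∈ Ioo a b, HasDerivAt ψ (ψ' t) t) (hψ'_pos : ∀ t ∈ Ioo a b, 0 < ψ' t) :
    ψ a < ψ b := by
  obtain ⟨c, hc, hslope⟩ := exists_hasDerivAt_eq_slope ψ ψ' hab hψ hψ'
  have hslope_pos : 0 < (ψ b - ψ a) / (b - a) := hslope ▸ hψ'_pos c hc
  exact sub_pos.1 ((div_pos_iff_of_pos_right (sub_pos.2 hab)).1 hslope_pos)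

theorem abs_integral_mul_deriv_mul_le (hab : a ≤ b) (hψ : ContinuousOn ψ (Icc a b))
    (hψ' : ∀ τ ∈ Ioo a b, HasDerivAt ψ (ψ' τ) τ) (hψ'_nonneg : ∀ τ ∈ Ioo a b, 0 ≤ ψ' τ)
    (hk : ∀ τ ∈ Ioo a b, |k τ| ≤ A) (hx : ∀ τ ∈ Ioo a b, |x τ| ≤ B) :
    |∫ τ in a..b, k τ * ψ' τ * x τ| ≤ A * B * (ψ b - ψ a) := by
  have hint : IntervalIntegrable ψ' volume a b :=
    (intervalIntegrable_iff_integrableOn_Ioc_of_le hab).2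
      (intervalIntegral.integrableOn_deriv_of_nonneg hψ hψ' hψ'_nonneg)
  have hpointwise : ∀ τ ∈ Ioo a b, ‖k τ * ψ' τ * x τ‖ ≤ A * B * ψ' τ := fun τ hτ =>
    calc ‖k τ * ψ' τ * x τ‖ = |k τ| * |x τ| * ψ' τ := by
          rw [Real.norm_eq_abs, abs_mul, abs_mul, abs_of_nonneg (hψ'_nonneg τ hτ), mul_right_comm]
      _ ≤ A * B * ψ' τ := mul_le_mul_of_nonneg_right
          (mul_le_mul (hk τ hτ) (hx τ hτ) (abs_nonneg _) ((abs_nonneg _).trans (hk τ hτ)))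
          (hψ'_nonneg τ hτ)
  rw [← intervalIntegral.integral_eq_sub_of_hasDerivAt_of_le hab hψ hψ' hint,
    ← intervalIntegral.integral_const_mul, ← Real.norm_eq_abs]
  refine intervalIntegral.norm_integral_le_of_norm_le hab ?_ (hint.const_mul _)
  filter_upwards [Measure.ae_ne volume b] with τ hτb hτ
  exact hpointwise τ ⟨hτ.1, hτ.2.lt_of_ne hτb⟩

end Derivative

section Eigenvalue

variable {a b α β κ lam g : ℝ} {ψ ψ' x : ℝ → ℝ}

theorem supNorm_le_of_mild_solution (hab : a ≤ b) (hβ : 0 ≤ β) (hαβ : 1 ≤ α + β)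
    (hψ : ContinuousOn ψ (Icc a b)) (hψ' : ∀ t ∈ Ioo a b, HasDerivAt ψ (ψ' t) t)
    (hψ'_nonneg : ∀ t ∈ Ioo a b, 0 ≤ ψ' t) (hx : ContinuousOn x (Icc a b))
    (hmild : ∀ t ∈ Icc a b, x t = ((ψ t - ψ a) / (ψ b - ψ a)) ^ β * g -
      lam * ∫ τ in a..b, G a b α β ψ τ t * ψ' τ * x τ) :
    supNorm a b x ≤
      |g| + |lam| * (fracKernel (α + β) ψ a b * supNorm a b x * (ψ b - ψ a)) := by
  have hmono : MonotoneOn ψ (Icc a b) := by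
    refine monotoneOn_of_hasDerivWithinAt_nonneg (f' := ψ') (convex_Icc a b) hψ ?_ ?_ <;>
      rw [interior_Icc]
    exacts [fun t ht => (hψ' t ht).hasDerivWithinAt, hψ'_nonneg]
  refine supNorm_le hab fun t ht => ?_
  obtain ⟨hw_nonneg, hw_le⟩ := rpow_relative_increment_mem_Icc hmono hβ ht
  have hboundary : |((ψ t - ψ a) / (ψ b - ψ a)) ^ β * g| ≤ |g| := by
    rw [abs_mul, abs_of_nonneg hw_nonneg]
    exact mul_le_of_le_one_left (abs_nonneg g) hw_le
  have hintegral : |∫ τ in a..b, G a b α β ψ τ t * ψ' τ * x τ| ≤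
      fracKernel (α + β) ψ a b * supNorm a b x * (ψ b - ψ a) :=
    abs_integral_mul_deriv_mul_le hab hψ hψ' hψ'_nonneg
      (fun τ hτ => abs_G_le hmono hβ hαβ (Ioo_subset_Icc_self hτ) ht)
      (fun τ hτ => abs_le_supNorm hx (Ioo_subset_Icc_self hτ))
  rw [hmild t ht]
  refine (abs_sub _ _).trans (add_le_add hboundary ?_)
  rw [abs_mul]
  exact mul_le_mul_of_nonneg_left hintegral (abs_nonneg lam)

theorem eigenvalue_lower_bound_general (hβ : 0 ≤ β) (hαβ : 1 ≤ α + β)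
    (hψ : ContinuousOn ψ (Icc a b)) (hψ' : ∀ t ∈ Ioo a b, HasDerivAt ψ (ψ' t) t)
    (hψ'_nonneg : ∀ t ∈ Ioo a b, 0 ≤ ψ' t) (hL : ψ a < ψ b)
    (hx : ContinuousOn x (Icc a b)) (hx_ne : ∃ t ∈ Icc a b, x t ≠ 0)
    (hg : |g| ≤ κ * supNorm a b x)
    (hmild : ∀ t ∈ Icc a b, x t = ((ψ t - ψ a) / (ψ b - ψ a)) ^ β * g -
      lam * ∫ τ in a..b, G a b α β ψ τ t * ψ' τ * x τ) :
    (1 - κ) / ((ψ b - ψ a) ^ (α + β - 1) / Real.Gamma (α + β) * (ψ b - ψ a)) ≤ |lam| := by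
  have hGmax : 0 < fracKernel (α + β) ψ a b := div_pos (Real.rpow_pos_of_pos (sub_pos.2 hL) _)
    (Real.Gamma_pos_of_pos (zero_lt_one.trans_le hαβ))
  have hab : a ≤ b := hx_ne.elim fun _ h => h.1.1.trans h.1.2
  have hsup := supNorm_le_of_mild_solution hab hβ hαβ hψ hψ' hψ'_nonneg hx hmild
  change (1 - κ) / (fracKernel (α + β) ψ a b * (ψ b - ψ a)) ≤ |lam|
  rw [div_le_iff₀ (mul_pos hGmax (sub_pos.2 hL))]
  refine le_of_mul_le_mul_right ?_ (supNorm_pos hx hx_ne)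
  linarith

end Eigenvalue

theorem eigenvalue_lower_bound
    (a b α β κ lam : ℝ) (hab : a < b)
    (hα0 : 0 < α) (hα1 : α ≤ 1) (hβ0 : 0 < β) (hβ1 : β ≤ 1) (hαβ : 1 < α + β)
    (ψ ψd : ℝ → ℝ)
    (hψ : ∀ t ∈ Set.Icc a b, HasDerivAt ψ (ψd t) t)
    (hψd_cont : ContinuousOn ψd (Set.Icc a b))
    (hψd_pos : ∀ t ∈ Set.Icc a b, 0 < ψd t)
    (𝒢 : (ℝ → ℝ) → ℝ)
    (hκ0 : 0 < κ) (hκ1 : κ < 1)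
    (h𝒢 : ∀ x : ℝ → ℝ, ContinuousOn x (Set.Icc a b) → |𝒢 x| ≤ κ * supNorm a b x)
    (x : ℝ → ℝ) (hx_cont : ContinuousOn x (Set.Icc a b))
    (hx_nontrivial : ∃ t ∈ Set.Icc a b, x t ≠ 0)
    (hmild : ∀ t ∈ Set.Icc a b,
      x t = ((ψ t - ψ a) / (ψ b - ψ a)) ^ β * 𝒢 x -
        lam * ∫ τ in a..b, G a b α β ψ τ t * ψd τ * x τ) :
    |lam| ≥ (1 - κ) /
      ((ψ b - ψ a) ^ (α + β - 1) / Real.Gamma (α + β) * (ψ b - ψ a)) := by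
  have hψ_cont : ContinuousOn ψ (Icc a b) := HasDerivAt.continuousOn hψ
  have hψ_Ioo : ∀ t ∈ Ioo a b, HasDerivAt ψ (ψd t) t := fun t ht => hψ t (Ioo_subset_Icc_self ht)
  have hψd_Ioo : ∀ t ∈ Ioo a b, 0 < ψd t := fun t ht => hψd_pos t (Ioo_subset_Icc_self ht)
  exact eigenvalue_lower_bound_general hβ0.le hαβ.le hψ_cont hψ_Ioo
    (fun t ht => (hψd_Ioo t ht).le) (lt_of_hasDerivAt_pos hab hψ_cont hψ_Ioo hψd_Ioo)
    hx_cont hx_nontrivial (h𝒢 x hx_cont) hmild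
end
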